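/- For i indexing the following critical offspring distributions — Φ_{1,m}(t) = ((m−1+t)/m)^m for integers m ≥ 2, Φ_2(t) = e^{t−1}, Φ_3(t) = (1+t²)/2, Φ_4(t) = 1/(2−t), Φ_{5,m}(t) = (m−1+t^m)/m for integers m ≥ 3 — let μ_i(α) = ∑_{n≥1} n^α q_n^{(i)} and μ_i′ = ∑_{n≥1} q_n^{(i)} log n, where (q_n^{(i)}) are the corresponding tree-size probabilities. Then: (i) for every real α < 0, μ_{1,m}(α) is strictly increasing in m ≥ 2, μ_{5,m}(α) is strictly increasing in m ≥ 3, and μ_{1,m}(α) < μ_2(α) < μ_3(α) < μ_4(α) < μ_{5,3}(α) for every m ≥ 2; (ii) for every real α with 0 < α < 1/2 all these orderings are reversed; (iii) μ_{1,m}′ is strictly decreasing in m ≥ 2, μ_{5,m}′ is strictly decreasing in m ≥ 3, and μ_{1,m}′ > μ_2′ > μ_3′ > μ_4′ > μ_{5,3}′ for every m ≥ 2. -/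

import Mathlib

/-- `q` is the tree-size distribution of the critical Galton–Watson tree whose offspring
pgf is `Φ`: `q` has zero constant term, nonnegative entries summing to `1`, and its
generating function `y(z) = ∑ q_n z^n` satisfies `y(z) = z·Φ(y(z))` on `[0,1]`. -/
def IsTreeSizeDist (Φ : ℝ → ℝ) (q : ℕ → ℝ) : Prop :=
  q 0 = 0 ∧ (∀ n, 0 ≤ q n) ∧ (∑' n, q n) = 1 ∧
    ∀ z ∈ Set.Icc (0:ℝ) 1, (∑' n, q n * z ^ n) = z * Φ (∑' n, q n * z ^ n)

/-- `μ(α) = ∑ n^α q_n`. -/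
noncomputable def muPow (q : ℕ → ℝ) (α : ℝ) : ℝ := ∑' n : ℕ, (n : ℝ) ^ α * q n

/-- `μ' = ∑ q_n log n`. -/
noncomputable def muLog (q : ℕ → ℝ) : ℝ := ∑' n : ℕ, q n * Real.log n

/-!
Write `y(z) = ∑ qₙ zⁿ`. For `α < 1`, Tonelli's theorem gives
`Γ(1 - α) ∑ qₙ (n ^ α - 1) / α = ∫₀^∞ (e⁻ˣ - y(e⁻ˣ)) x ^ (-α - 1) dx`,
with `log n` in place of `(n ^ α - 1) / α` at `α = 0`, so all three orderings follow once the
functions `y` are ordered on `(0, 1)`. If `Φ < Ψ` on `(0, 1)` and `Φ` is convex, the tree-size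
generating functions are ordered the same way: at a solution `w` of `w = z Ψ(w)` the convex function
`t ↦ z Φ(t) - t` is negative, as it is at `1`, so it has no zero in `[w, 1]`. The integral converges
for `α < 1/2` because criticality forces `1 - y(z) = O(√(1 - z))`.
-/

open MeasureTheory Set

section BoxCox

variable {α a b : ℝ}

/-- The Box–Cox transform `(b ^ α - 1) / α`, which is `log b` at `α = 0`. Writing it as an integral
treats power moments and logarithmic moments at once. -/
noncomputable def boxCox (α b : ℝ) : ℝ := ∫ s in (1 : ℝ)..b, s ^ (α - 1)

lemma boxCox_of_ne_zero (hα : α ≠ 0) (hb : 0 < b) : boxCox α b = (b ^ α - 1) / α := by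
  have h_zero : (0 : ℝ) ∉ uIcc 1 b := notMem_uIcc_of_lt one_pos hb
  rw [boxCox, integral_rpow (Or.inr ⟨by simpa [sub_eq_iff_eq_add] using hα, h_zero⟩)]
  simp only [sub_add_cancel, Real.one_rpow]

lemma boxCox_zero (hb : 0 < b) : boxCox 0 b = Real.log b := by
  simp only [boxCox, zero_sub, Real.rpow_neg_one, integral_inv_of_pos one_pos hb, div_one]

lemma boxCox_nonneg (hb : 1 ≤ b) : 0 ≤ boxCox α b :=
  intervalIntegral.integral_nonneg hb fun _ hs => Real.rpow_nonneg (zero_le_one.trans hs.1) _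

lemma exp_neg_mul_sub_mul_rpow {x : ℝ} (hx : 0 < x) (α a b : ℝ) :
    (Real.exp (-(a * x)) - Real.exp (-(b * x))) * x ^ (-α - 1) =
      ∫ s in a..b, x ^ (-α) * Real.exp (-(s * x)) := by
  have h_deriv (s : ℝ) : HasDerivAt (fun s => -x ^ (-α - 1) * Real.exp (-(s * x)))
      (x ^ (-α) * Real.exp (-(s * x))) s := by
    refine ((((hasDerivAt_id s).mul_const x).neg.exp).const_mul (-x ^ (-α - 1))).congr_deriv ?_
    rw [Real.rpow_sub_one hx.ne']
    simp only [id_eq, Pi.neg_apply]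
    field_simp
  rw [intervalIntegral.integral_eq_sub_of_hasDerivAt (fun s _ => h_deriv s)
    (Continuous.intervalIntegrable (by fun_prop) _ _)]
  ring

lemma lintegral_rpow_mul_exp_neg_mul (hα : α < 1) {s : ℝ} (hs : 0 < s) :
    ∫⁻ x in Ioi (0 : ℝ), ENNReal.ofReal (x ^ (-α) * Real.exp (-(s * x))) =
      ENNReal.ofReal (Real.Gamma (1 - α) * s ^ (α - 1)) := by
  have hΓ : 0 < Real.Gamma (1 - α) := Real.Gamma_pos_of_pos (by linarith)
  have h_eval : ∫ x in Ioi (0 : ℝ), x ^ (-α) * Real.exp (-(s * x)) =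
      Real.Gamma (1 - α) * s ^ (α - 1) := by
    have h := Real.integral_rpow_mul_exp_neg_mul_Ioi (sub_pos.2 hα) hs
    rwa [sub_sub_cancel_left, one_div, Real.inv_rpow hs.le, ← Real.rpow_neg hs.le, neg_sub,
      mul_comm] at h
  have h_int : IntegrableOn (fun x : ℝ => x ^ (-α) * Real.exp (-(s * x))) (Ioi 0) :=
    Integrable.of_integral_ne_zero
      (h_eval.symm ▸ (mul_pos hΓ (Real.rpow_pos_of_pos hs _)).ne')
  rw [← h_eval, ofReal_integral_eq_lintegral_ofReal h_int]
  filter_upwards [self_mem_ae_restrict measurableSet_Ioi] with x hx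
  exact mul_nonneg (Real.rpow_nonneg (le_of_lt hx) _) (Real.exp_pos _).le

/-- At `α = 0` this is Frullani's integral. -/
lemma lintegral_exp_neg_mul_sub_mul_rpow (hα : α < 1) (ha : 0 < a) (hab : a ≤ b) :
    ∫⁻ x in Ioi (0 : ℝ),
        ENNReal.ofReal ((Real.exp (-(a * x)) - Real.exp (-(b * x))) * x ^ (-α - 1)) =
      ENNReal.ofReal (Real.Gamma (1 - α) * ∫ s in a..b, s ^ (α - 1)) := by
  have h_int : IntegrableOn (fun s : ℝ => Real.Gamma (1 - α) * s ^ (α - 1)) (Ioc a b) := by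
    refine ((intervalIntegral.intervalIntegrable_rpow (Or.inr ?_)).const_mul _).1
    exact notMem_uIcc_of_lt ha (ha.trans_le hab)
  calc
    _ = ∫⁻ x in Ioi (0 : ℝ), ∫⁻ s in Ioc a b,
          ENNReal.ofReal (x ^ (-α) * Real.exp (-(s * x))) := by
      refine setLIntegral_congr_fun measurableSet_Ioi fun x (hx : 0 < x) => ?_
      have h_cont : Continuous fun s : ℝ => x ^ (-α) * Real.exp (-(s * x)) := by fun_prop
      rw [exp_neg_mul_sub_mul_rpow hx, intervalIntegral.integral_of_le hab,
        ofReal_integral_eq_lintegral_ofReal (h_cont.intervalIntegrable a b).1]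
      exact .of_forall fun s => by positivity
    _ = ∫⁻ s in Ioc a b, ∫⁻ x in Ioi (0 : ℝ),
          ENNReal.ofReal (x ^ (-α) * Real.exp (-(s * x))) :=
      lintegral_lintegral_swap (by fun_prop)
    _ = ∫⁻ s in Ioc a b, ENNReal.ofReal (Real.Gamma (1 - α) * s ^ (α - 1)) :=
      setLIntegral_congr_fun measurableSet_Ioc fun s hs =>
        lintegral_rpow_mul_exp_neg_mul hα (ha.trans hs.1)
    _ = _ := by
      rw [← intervalIntegral.integral_const_mul, intervalIntegral.integral_of_le hab,
        ofReal_integral_eq_lintegral_ofReal h_int]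
      filter_upwards [self_mem_ae_restrict measurableSet_Ioc] with s hs
      exact mul_nonneg (Real.Gamma_pos_of_pos (by linarith)).le
        (Real.rpow_nonneg (ha.trans hs.1).le _)

end BoxCox

/-- The probability generating function `z ↦ ∑ qₙ zⁿ` of `q`; for a tree-size distribution this is
the function `y`. -/
noncomputable def genFun (q : ℕ → ℝ) (z : ℝ) : ℝ := ∑' n, q n * z ^ n

/-- The integrand `(e⁻ˣ - y(e⁻ˣ)) x ^ (-α - 1)`, with `y = genFun q`, whose integral over `(0, ∞)`
is `Γ(1 - α)` times the Box–Cox moment `∑ qₙ (n ^ α - 1) / α`. -/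
noncomputable def genFunGap (q : ℕ → ℝ) (α x : ℝ) : ℝ :=
  (Real.exp (-x) - genFun q (Real.exp (-x))) * x ^ (-α - 1)

/-- `q` is a probability distribution on the positive integers, extended by `q 0 = 0`. -/
structure IsPosNatDist (q : ℕ → ℝ) : Prop where
  zero : q 0 = 0
  nonneg : ∀ n, 0 ≤ q n
  hasSum_one : HasSum q 1

lemma exp_neg_mem_Ioo {x : ℝ} (hx : 0 < x) : Real.exp (-x) ∈ Ioo (0 : ℝ) 1 :=
  ⟨Real.exp_pos _, Real.exp_lt_one_iff.2 (neg_neg_of_pos hx)⟩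

lemma measurable_genFunGap (q : ℕ → ℝ) (α : ℝ) : Measurable (genFunGap q α) := by
  have h_genFun : Measurable (genFun q) := Measurable.tsum fun n => by fun_prop
  unfold genFunGap
  fun_prop

namespace IsPosNatDist

variable {p q : ℕ → ℝ} {α z : ℝ}

lemma hasSum_genFun (h : IsPosNatDist q) (hz : z ∈ Icc (0 : ℝ) 1) :
    HasSum (fun n => q n * z ^ n) (genFun q z) :=
  (h.hasSum_one.summable.of_nonneg_of_le (fun n => mul_nonneg (h.nonneg n) (pow_nonneg hz.1 n))
    fun n => mul_le_of_le_one_right (h.nonneg n) (pow_le_one₀ hz.1 hz.2)).hasSum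

lemma genFun_one (h : IsPosNatDist q) : genFun q 1 = 1 := by
  simp only [genFun, one_pow, mul_one, h.hasSum_one.tsum_eq]

lemma genFun_le_self (h : IsPosNatDist q) (hz : z ∈ Icc (0 : ℝ) 1) : genFun q z ≤ z := by
  have h_term (n : ℕ) : q n * z ^ n ≤ q n * z := by
    rcases eq_or_ne n 0 with rfl | hn
    · simp [h.zero]
    · exact mul_le_mul_of_nonneg_left (pow_le_of_le_one hz.1 hz.2 hn) (h.nonneg n)
  simpa only [one_mul] using
    hasSum_le h_term (h.hasSum_genFun hz) (h.hasSum_one.mul_right z)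

lemma genFun_pos (h : IsPosNatDist q) (hz : z ∈ Ioc (0 : ℝ) 1) : 0 < genFun q z := by
  obtain ⟨n, hn⟩ : ∃ n, q n ≠ 0 := by
    by_contra! h_zero
    exact one_ne_zero (h.hasSum_one.unique (funext h_zero ▸ hasSum_zero))
  exact (h.hasSum_genFun ⟨hz.1.le, hz.2⟩).summable.tsum_pos
    (fun k => mul_nonneg (h.nonneg k) (pow_nonneg hz.1.le k)) n
    (mul_pos ((h.nonneg n).lt_of_ne' hn) (pow_pos hz.1 n))

lemma genFun_mem_Ioo (h : IsPosNatDist q) (hz : z ∈ Ioo (0 : ℝ) 1) : genFun q z ∈ Ioo (0 : ℝ) 1 :=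
  ⟨h.genFun_pos (Ioo_subset_Ioc_self hz),
    (h.genFun_le_self (Ioo_subset_Icc_self hz)).trans_lt hz.2⟩

lemma hasSum_genFunGap (h : IsPosNatDist q) (α : ℝ) {x : ℝ} (hx : 0 < x) :
    HasSum (fun n : ℕ => q n * ((Real.exp (-(1 * x)) - Real.exp (-(n * x))) * x ^ (-α - 1)))
      (genFunGap q α x) := by
  have h_gen := h.hasSum_genFun (Ioo_subset_Icc_self (exp_neg_mem_Ioo hx))
  have h_sum := ((h.hasSum_one.mul_right (Real.exp (-x))).sub h_gen).mul_right (x ^ (-α - 1))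
  simp only [← Real.exp_nat_mul, mul_neg, one_mul, ← mul_sub, mul_assoc] at h_sum
  simpa only [one_mul, genFunGap] using h_sum

lemma mul_boxCox_nonneg (h : IsPosNatDist q) (α : ℝ) (n : ℕ) : 0 ≤ q n * boxCox α n := by
  rcases n.eq_zero_or_pos with rfl | hn
  · simp [h.zero]
  · exact mul_nonneg (h.nonneg n) (boxCox_nonneg (Nat.one_le_cast.2 hn))

lemma lintegral_genFunGap (h : IsPosNatDist q) (hα : α < 1) :
    ∫⁻ x in Ioi (0 : ℝ), ENNReal.ofReal (genFunGap q α x) =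
      ∑' n : ℕ, ENNReal.ofReal (Real.Gamma (1 - α) * (q n * boxCox α n)) := by
  let kernel (n : ℕ) (x : ℝ) : ℝ :=
    (Real.exp (-(1 * x)) - Real.exp (-(n * x))) * x ^ (-α - 1)
  have h_term (n : ℕ) {x : ℝ} (hx : 0 < x) : 0 ≤ q n * kernel n x := by
    rcases n.eq_zero_or_pos with rfl | hn
    · simp [h.zero]
    · have h_exp : Real.exp (-(n * x)) ≤ Real.exp (-(1 * x)) := by
        gcongr
        exact Nat.one_le_cast.2 hn
      exact mul_nonneg (h.nonneg n)
        (mul_nonneg (sub_nonneg.2 h_exp) (Real.rpow_nonneg hx.le _))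
  calc
    _ = ∫⁻ x in Ioi (0 : ℝ), ∑' n, ENNReal.ofReal (q n) * ENNReal.ofReal (kernel n x) := by
      refine setLIntegral_congr_fun measurableSet_Ioi fun x (hx : 0 < x) => ?_
      have h_sum := h.hasSum_genFunGap α hx
      rw [← h_sum.tsum_eq, ENNReal.ofReal_tsum_of_nonneg (fun n => h_term n hx) h_sum.summable]
      exact tsum_congr fun n => ENNReal.ofReal_mul (h.nonneg n)
    _ = ∑' n, ENNReal.ofReal (q n) * ∫⁻ x in Ioi (0 : ℝ), ENNReal.ofReal (kernel n x) := by
      rw [lintegral_tsum fun n => by fun_prop]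
      exact tsum_congr fun n => lintegral_const_mul _ (by fun_prop)
    _ = _ := by
      refine tsum_congr fun n => ?_
      rcases n.eq_zero_or_pos with rfl | hn
      · simp [h.zero]
      · rw [lintegral_exp_neg_mul_sub_mul_rpow hα one_pos (Nat.one_le_cast.2 hn),
          ← ENNReal.ofReal_mul (h.nonneg n), mul_left_comm, boxCox]

lemma summable_mul_boxCox_iff (h : IsPosNatDist q) (hα : α < 1) :
    (Summable fun n : ℕ => q n * boxCox α n) ↔
      ∫⁻ x in Ioi (0 : ℝ), ENNReal.ofReal (genFunGap q α x) ≠ ⊤ := by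
  have hΓ : 0 < Real.Gamma (1 - α) := Real.Gamma_pos_of_pos (by linarith)
  rw [h.lintegral_genFunGap hα, ← summable_mul_left_iff hΓ.ne']
  refine ⟨Summable.tsum_ofReal_ne_top, fun h_fin => ?_⟩
  refine (ENNReal.summable_toReal h_fin).congr fun n => ?_
  exact ENNReal.toReal_ofReal (mul_nonneg hΓ.le (h.mul_boxCox_nonneg α n))

lemma lintegral_genFunGap_eq_ofReal (h : IsPosNatDist q) (hα : α < 1)
    (hs : Summable fun n : ℕ => q n * boxCox α n) :
    ∫⁻ x in Ioi (0 : ℝ), ENNReal.ofReal (genFunGap q α x) =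
      ENNReal.ofReal (Real.Gamma (1 - α) * ∑' n : ℕ, q n * boxCox α n) := by
  have hΓ : 0 < Real.Gamma (1 - α) := Real.Gamma_pos_of_pos (by linarith)
  rw [h.lintegral_genFunGap hα, ← tsum_mul_left, ENNReal.ofReal_tsum_of_nonneg
    (fun n => mul_nonneg hΓ.le (h.mul_boxCox_nonneg α n)) (hs.mul_left _)]

lemma summable_mul_boxCox_of_genFun_le (hp : IsPosNatDist p) (hq : IsPosNatDist q)
    (hle : ∀ z ∈ Ioo (0 : ℝ) 1, genFun p z ≤ genFun q z) (hα : α < 1)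
    (hs : Summable fun n : ℕ => p n * boxCox α n) :
    Summable fun n : ℕ => q n * boxCox α n := by
  rw [hp.summable_mul_boxCox_iff hα] at hs
  refine (hq.summable_mul_boxCox_iff hα).2 (ne_top_of_le_ne_top hs ?_)
  refine setLIntegral_mono' measurableSet_Ioi fun x (hx : 0 < x) => ENNReal.ofReal_le_ofReal ?_
  exact mul_le_mul_of_nonneg_right (sub_le_sub_left (hle _ (exp_neg_mem_Ioo hx)) _)
    (Real.rpow_nonneg hx.le _)

lemma tsum_mul_boxCox_lt_of_genFun_lt (hp : IsPosNatDist p) (hq : IsPosNatDist q)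
    (hlt : ∀ z ∈ Ioo (0 : ℝ) 1, genFun p z < genFun q z) (hα : α < 1)
    (hs : Summable fun n : ℕ => p n * boxCox α n) :
    ∑' n : ℕ, q n * boxCox α n < ∑' n : ℕ, p n * boxCox α n := by
  have hsq := hp.summable_mul_boxCox_of_genFun_le hq (fun z hz => (hlt z hz).le) hα hs
  have h_gap {x : ℝ} (hx : 0 < x) :
      ENNReal.ofReal (genFunGap q α x) < ENNReal.ofReal (genFunGap p α x) := by
    have hz := exp_neg_mem_Ioo hx
    have h_rpow : 0 < x ^ (-α - 1) := Real.rpow_pos_of_pos hx _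
    have h_pos : 0 < Real.exp (-x) - genFun p (Real.exp (-x)) :=
      sub_pos.2 ((hlt _ hz).trans_le (hq.genFun_le_self (Ioo_subset_Icc_self hz)))
    refine (ENNReal.ofReal_lt_ofReal_iff (mul_pos h_pos h_rpow)).2 ?_
    exact mul_lt_mul_of_pos_right (sub_lt_sub_left (hlt _ hz) _) h_rpow
  have h_lintegral := setLIntegral_strict_mono (μ := volume) measurableSet_Ioi (by simp)
    (measurable_genFunGap p α).ennreal_ofReal ((hq.summable_mul_boxCox_iff hα).1 hsq)
    (.of_forall fun x hx => h_gap hx)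
  rw [hp.lintegral_genFunGap_eq_ofReal hα hs, hq.lintegral_genFunGap_eq_ofReal hα hsq]
    at h_lintegral
  exact lt_of_mul_lt_mul_left (ENNReal.ofReal_lt_ofReal_iff'.1 h_lintegral).1
    (Real.Gamma_pos_of_pos (by linarith)).le

lemma muLog_eq (h : IsPosNatDist q) : muLog q = ∑' n : ℕ, q n * boxCox 0 n := by
  refine tsum_congr fun n => ?_
  rcases n.eq_zero_or_pos with rfl | hn
  · simp [h.zero]
  · rw [boxCox_zero (Nat.cast_pos.2 hn)]

lemma muPow_eq (h : IsPosNatDist q) (hα : α ≠ 0)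
    (hs : Summable fun n : ℕ => q n * boxCox α n) :
    muPow q α = 1 + α * ∑' n : ℕ, q n * boxCox α n := by
  rw [muPow, ← (h.hasSum_one.add (hs.hasSum.mul_left α)).tsum_eq]
  refine tsum_congr fun n => ?_
  rcases n.eq_zero_or_pos with rfl | hn
  · simp [h.zero]
  · rw [boxCox_of_ne_zero hα (Nat.cast_pos.2 hn)]
    field_simp
    ring

end IsPosNatDist

/-- The order of tree-size distributions in which the standard models are arranged: from `p` to `q`
the moments of negative order increase, while those of order in `(0, 1/2)` and the logarithmic
moment decrease. -/
structure MomentLT (p q : ℕ → ℝ) : Prop where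
  muPow_neg : ∀ α < 0, muPow p α < muPow q α
  muPow_pos : ∀ α, 0 < α → α < 1 / 2 → muPow q α < muPow p α
  muLog : muLog q < muLog p

lemma IsPosNatDist.momentLT_of_genFun_lt {p q : ℕ → ℝ} (hp : IsPosNatDist p)
    (hq : IsPosNatDist q) (hlt : ∀ z ∈ Ioo (0 : ℝ) 1, genFun p z < genFun q z)
    (hs : ∀ α < (1 / 2 : ℝ), Summable fun n : ℕ => p n * boxCox α n) : MomentLT p q := by
  have h_boxCox (α : ℝ) (hα : α < 1 / 2) :
      ∑' n : ℕ, q n * boxCox α n < ∑' n : ℕ, p n * boxCox α n :=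
    hp.tsum_mul_boxCox_lt_of_genFun_lt hq hlt (by linarith) (hs α hα)
  have hsq (α : ℝ) (hα : α < 1 / 2) : Summable fun n : ℕ => q n * boxCox α n :=
    hp.summable_mul_boxCox_of_genFun_le hq (fun z hz => (hlt z hz).le) (by linarith) (hs α hα)
  refine ⟨fun α hα => ?_, fun α hα hα' => ?_, ?_⟩
  · have hα' : α < 1 / 2 := by linarith
    rw [hp.muPow_eq hα.ne (hs α hα'), hq.muPow_eq hα.ne (hsq α hα')]
    linarith [mul_lt_mul_of_neg_left (h_boxCox α hα') hα]
  · rw [hp.muPow_eq hα.ne' (hs α hα'), hq.muPow_eq hα.ne' (hsq α hα')]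
    linarith [mul_lt_mul_of_pos_left (h_boxCox α hα') hα]
  · rw [hp.muLog_eq, hq.muLog_eq]
    exact h_boxCox 0 (by norm_num)

/-- The two properties of a critical offspring pgf other than `Φ(t) = t` on which the comparison of
tree sizes rests: convexity, and a quadratic gap above the tangent line `t ↦ t` at `1`. -/
structure IsQuadraticallyCritical (Φ : ℝ → ℝ) : Prop where
  convexOn : ConvexOn ℝ (Icc 0 1) Φ
  exists_gap : ∃ c > 0, ∀ t ∈ Ioo (0 : ℝ) 1, t + c * (1 - t) ^ 2 ≤ Φ t

lemma IsQuadraticallyCritical.mono {Φ Ψ : ℝ → ℝ} (hΦ : IsQuadraticallyCritical Φ)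
    (hΨ : ConvexOn ℝ (Icc 0 1) Ψ) (hle : ∀ t ∈ Ioo (0 : ℝ) 1, Φ t ≤ Ψ t) :
    IsQuadraticallyCritical Ψ :=
  let ⟨c, hc, h_gap⟩ := hΦ.exists_gap
  ⟨hΨ, c, hc, fun t ht => (h_gap t ht).trans (hle t ht)⟩

namespace IsTreeSizeDist

variable {Φ Ψ : ℝ → ℝ} {p q : ℕ → ℝ} {c z : ℝ}

lemma isPosNatDist (h : IsTreeSizeDist Φ q) : IsPosNatDist q := by
  obtain ⟨h_zero, h_nonneg, h_tsum, -⟩ := h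
  have h_summable : Summable q := by
    by_contra h_not
    exact zero_ne_one ((tsum_eq_zero_of_not_summable h_not).symm.trans h_tsum)
  exact ⟨h_zero, h_nonneg, h_tsum ▸ h_summable.hasSum⟩

lemma genFun_eq (h : IsTreeSizeDist Φ q) (hz : z ∈ Icc (0 : ℝ) 1) :
    genFun q z = z * Φ (genFun q z) :=
  h.2.2.2 z hz

lemma pgf_one (h : IsTreeSizeDist Φ q) : Φ 1 = 1 := by
  have h_eq := h.genFun_eq (right_mem_Icc.2 zero_le_one)
  rwa [h.isPosNatDist.genFun_one, one_mul, eq_comm] at h_eq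

lemma genFun_lt_genFun (hp : IsTreeSizeDist Φ p) (hq : IsTreeSizeDist Ψ q)
    (hΦ : ConvexOn ℝ (Icc 0 1) Φ) (hlt : ∀ t ∈ Ioo (0 : ℝ) 1, Φ t < Ψ t)
    (hz : z ∈ Ioo (0 : ℝ) 1) : genFun p z < genFun q z := by
  have hz' := Ioo_subset_Icc_self hz
  have hy := hp.isPosNatDist.genFun_mem_Ioo hz
  have hw := hq.isPosNatDist.genFun_mem_Ioo hz
  have hy_eq := hp.genFun_eq hz'
  have hw_eq := hq.genFun_eq hz'
  set y := genFun p z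
  set w := genFun q z
  by_contra! hwy
  have h_convex : ConvexOn ℝ (Icc 0 1) fun t => z * Φ t - t :=
    (hΦ.smul hz.1.le).sub (concaveOn_id (convex_Icc 0 1))
  have h_w : z * Φ w - w < 0 := by linarith [mul_lt_mul_of_pos_left (hlt w hw) hz.1]
  have h_one : z * Φ 1 - 1 < 0 := by
    rw [hp.pgf_one]
    linarith [hz.2]
  have h_y : z * Φ y - y ≤ max (z * Φ w - w) (z * Φ 1 - 1) :=
    h_convex.le_max_of_mem_Icc (Ioo_subset_Icc_self hw) (right_mem_Icc.2 zero_le_one)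
      ⟨hwy, hy.2.le⟩
  exact absurd (h_y.trans_lt (max_lt h_w h_one)) (by linarith)

lemma one_sub_genFun_le (h : IsTreeSizeDist Φ q) (hc : 0 < c)
    (hΦ : ∀ t ∈ Ioo (0 : ℝ) 1, t + c * (1 - t) ^ 2 ≤ Φ t) (hz : z ∈ Ioo (0 : ℝ) 1) :
    1 - genFun q z ≤ √((1 - z) / c) := by
  have hz' := Ioo_subset_Icc_self hz
  have hy_eq := h.genFun_eq hz'
  have hy_le := h.isPosNatDist.genFun_le_self hz'
  have h_gap := hΦ _ (h.isPosNatDist.genFun_mem_Ioo hz)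
  set y := genFun q z
  have h_mul : z * (c * (1 - y) ^ 2) ≤ z * (1 - z) :=
    calc z * (c * (1 - y) ^ 2) ≤ z * (Φ y - y) :=
          mul_le_mul_of_nonneg_left (by linarith) hz.1.le
      _ = y * (1 - z) := by linear_combination -hy_eq
      _ ≤ z * (1 - z) := mul_le_mul_of_nonneg_right hy_le (sub_nonneg.2 hz.2.le)
  refine Real.le_sqrt_of_sq_le ((le_div_iff₀' hc).2 ?_)
  exact le_of_mul_le_mul_left h_mul hz.1

lemma sub_genFun_le (h : IsTreeSizeDist Φ q) (hc : 0 < c)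
    (hΦ : ∀ t ∈ Ioo (0 : ℝ) 1, t + c * (1 - t) ^ 2 ≤ Φ t) (hz : z ∈ Ioo (0 : ℝ) 1) :
    z - genFun q z ≤ z * √((1 - z) / c) := by
  have h_pgf : genFun q z ≤ Φ (genFun q z) :=
    (le_add_of_nonneg_right (by positivity)).trans (hΦ _ (h.isPosNatDist.genFun_mem_Ioo hz))
  calc z - genFun q z = z * (1 - Φ (genFun q z)) := by
        linear_combination -h.genFun_eq (Ioo_subset_Icc_self hz)
    _ ≤ z * √((1 - z) / c) :=
        mul_le_mul_of_nonneg_left (by linarith [h.one_sub_genFun_le hc hΦ hz]) hz.1.le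

lemma genFunGap_le (h : IsTreeSizeDist Φ q) (hc : 0 < c)
    (hΦ : ∀ t ∈ Ioo (0 : ℝ) 1, t + c * (1 - t) ^ 2 ≤ Φ t) (α : ℝ) {x : ℝ} (hx : 0 < x) :
    genFunGap q α x ≤ (√c)⁻¹ * (Real.exp (-x) * x ^ (1 / 2 - α - 1)) := by
  have h_sqrt : √((1 - Real.exp (-x)) / c) ≤ x ^ (1 / 2 : ℝ) * (√c)⁻¹ := by
    rw [← Real.sqrt_eq_rpow, ← div_eq_mul_inv, ← Real.sqrt_div hx.le]
    gcongr
    linarith [Real.add_one_le_exp (-x)]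
  calc genFunGap q α x ≤ Real.exp (-x) * (x ^ (1 / 2 : ℝ) * (√c)⁻¹) * x ^ (-α - 1) := by
        refine mul_le_mul_of_nonneg_right ?_ (Real.rpow_nonneg hx.le _)
        exact (h.sub_genFun_le hc hΦ (exp_neg_mem_Ioo hx)).trans
          (mul_le_mul_of_nonneg_left h_sqrt (Real.exp_pos _).le)
    _ = (√c)⁻¹ * (Real.exp (-x) * x ^ (1 / 2 - α - 1)) := by
        rw [show 1 / 2 - α - 1 = 1 / 2 + (-α - 1) by ring, Real.rpow_add hx]
        ring

lemma summable_mul_boxCox (h : IsTreeSizeDist Φ q) (hc : 0 < c)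
    (hΦ : ∀ t ∈ Ioo (0 : ℝ) 1, t + c * (1 - t) ^ 2 ≤ Φ t) {α : ℝ} (hα : α < 1 / 2) :
    Summable fun n : ℕ => q n * boxCox α n := by
  have h_int : IntegrableOn (fun x => (√c)⁻¹ * (Real.exp (-x) * x ^ (1 / 2 - α - 1))) (Ioi 0) :=
    (Real.GammaIntegral_convergent (sub_pos.2 hα)).const_mul _
  refine (h.isPosNatDist.summable_mul_boxCox_iff (by linarith)).2
    (ne_top_of_le_ne_top h_int.lintegral_lt_top.ne ?_)
  exact setLIntegral_mono' measurableSet_Ioi fun x hx =>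
    ENNReal.ofReal_le_ofReal (h.genFunGap_le hc hΦ α hx)

theorem momentLT (hp : IsTreeSizeDist Φ p) (hq : IsTreeSizeDist Ψ q)
    (hΦ : IsQuadraticallyCritical Φ) (hlt : ∀ t ∈ Ioo (0 : ℝ) 1, Φ t < Ψ t) : MomentLT p q :=
  let ⟨_, hc, h_gap⟩ := hΦ.exists_gap
  hp.isPosNatDist.momentLT_of_genFun_lt hq.isPosNatDist
    (fun _ hz => hp.genFun_lt_genFun hq hΦ.convexOn hlt hz)
    fun _ hα => hp.summable_mul_boxCox hc h_gap hα

end IsTreeSizeDist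

section Inequalities

variable {m n : ℕ}

lemma one_add_div_pow_lt_one_add_div_pow (hm : 0 < m) (hmn : m < n) {x : ℝ} (hx : -m ≤ x)
    (hx0 : x ≠ 0) : (1 + x / m) ^ m < (1 + x / n) ^ n := by
  have hm' : (0 : ℝ) < m := Nat.cast_pos.2 hm
  have hmn' : (m : ℝ) < n := Nat.cast_lt.2 hmn
  have hn' : (0 : ℝ) < n := hm'.trans hmn'
  have h_base_m : 0 ≤ 1 + x / m := by
    rw [one_add_div hm'.ne']
    exact div_nonneg (by linarith) hm'.le
  have h_neg_one : -1 ≤ x / n := (le_div_iff₀ hn').2 (by linarith)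
  have h_bernoulli : 1 + x / m < (1 + x / n) ^ ((n : ℝ) / m) := by
    have h := one_add_mul_self_lt_rpow_one_add h_neg_one (div_ne_zero hx0 hn'.ne')
      ((one_lt_div hm').2 hmn')
    rwa [div_mul_div_comm, mul_comm, mul_div_mul_right _ _ hn'.ne'] at h
  calc (1 + x / m) ^ m < ((1 + x / n) ^ ((n : ℝ) / m)) ^ m :=
        pow_lt_pow_left₀ h_bernoulli h_base_m hm.ne'
    _ = (1 + x / n) ^ n := by
        rw [← Real.rpow_natCast, ← Real.rpow_mul (by linarith), div_mul_cancel₀ _ hm'.ne',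
          Real.rpow_natCast]

lemma one_add_div_pow_lt_exp (hm : 0 < m) {x : ℝ} (hx : -m ≤ x) (hx0 : x ≠ 0) :
    (1 + x / m) ^ m < Real.exp x := by
  have hm' : (0 : ℝ) < m := Nat.cast_pos.2 hm
  have h_base : 0 ≤ 1 + x / m := by
    rw [one_add_div hm'.ne']
    exact div_nonneg (by linarith) hm'.le
  calc (1 + x / m) ^ m < Real.exp (x / m) ^ m := by
        refine pow_lt_pow_left₀ ?_ h_base hm.ne'
        linarith [Real.add_one_lt_exp (div_ne_zero hx0 hm'.ne')]
    _ = Real.exp x := by rw [← Real.exp_nat_mul, mul_div_cancel₀ _ hm'.ne']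

lemma pow_sub_one_div_lt_pow_sub_one_div (hm : 0 < m) (hmn : m < n) {t : ℝ} (ht : 0 ≤ t)
    (ht1 : t ≠ 1) : (t ^ m - 1) / m < (t ^ n - 1) / n := by
  have hm' : (0 : ℝ) < m := Nat.cast_pos.2 hm
  have hmn' : (m : ℝ) < n := Nat.cast_lt.2 hmn
  have h_bernoulli : 1 + (n : ℝ) / m * (t ^ m - 1) < t ^ n := by
    have h := one_add_mul_self_lt_rpow_one_add (s := t ^ m - 1) (by linarith [pow_nonneg ht m])
      (sub_ne_zero.2 ((pow_eq_one_iff_of_nonneg ht hm.ne').not.2 ht1)) ((one_lt_div hm').2 hmn')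
    rwa [add_sub_cancel, ← Real.rpow_natCast t m, ← Real.rpow_mul ht,
      mul_div_cancel₀ _ hm'.ne', Real.rpow_natCast, Real.rpow_natCast] at h
  rw [lt_div_iff₀ (hm'.trans hmn')]
  linear_combination h_bernoulli

lemma exp_neg_lt_one_sub_add_sq_div_two {u : ℝ} (hu : 0 < u) :
    Real.exp (-u) < 1 - u + u ^ 2 / 2 := by
  have h_prod : 1 < (1 - u + u ^ 2 / 2) * (1 + u + u ^ 2 / 2) := by
    linarith [show 0 < u ^ 4 by positivity]
  have h_quadratic : 1 + u + u ^ 2 / 2 ≤ Real.exp u := Real.quadratic_le_exp_of_nonneg hu.le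
  rw [Real.exp_neg]
  calc (Real.exp u)⁻¹ ≤ (1 + u + u ^ 2 / 2)⁻¹ := inv_anti₀ (by positivity) h_quadratic
    _ < 1 - u + u ^ 2 / 2 := (inv_lt_iff_one_lt_mul₀ (by positivity)).2 h_prod

end Inequalities

section Models

variable {m n : ℕ} {t : ℝ}

/-- The offspring pgf `Φ_{1,m}` of `m`-ary trees. -/
noncomputable def maryPGF (m : ℕ) (t : ℝ) : ℝ := ((m - 1 + t) / m) ^ m

/-- The offspring pgf `Φ₂` of labelled trees. -/
noncomputable def labelledPGF (t : ℝ) : ℝ := Real.exp (t - 1)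

/-- The offspring pgf `Φ₃` of full binary trees. -/
noncomputable def fullBinaryPGF (t : ℝ) : ℝ := (1 + t ^ 2) / 2

/-- The offspring pgf `Φ₄` of ordered trees. -/
noncomputable def orderedPGF (t : ℝ) : ℝ := 1 / (2 - t)

/-- The offspring pgf `Φ_{5,m}` of full `m`-ary trees. -/
noncomputable def fullMaryPGF (m : ℕ) (t : ℝ) : ℝ := (m - 1 + t ^ m) / m

lemma maryPGF_eq (hm : 0 < m) (t : ℝ) : maryPGF m t = (1 + (t - 1) / m) ^ m := by
  rw [maryPGF, one_add_div (Nat.cast_ne_zero.2 hm.ne')]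
  ring

lemma fullMaryPGF_eq (hm : 0 < m) (t : ℝ) : fullMaryPGF m t = 1 + (t ^ m - 1) / m := by
  rw [fullMaryPGF, one_add_div (Nat.cast_ne_zero.2 hm.ne')]
  ring

lemma fullMaryPGF_two : fullMaryPGF 2 = fullBinaryPGF := by
  funext t
  norm_num [fullMaryPGF, fullBinaryPGF]

lemma maryPGF_lt_maryPGF (hm : 0 < m) (hmn : m < n) (ht : t ∈ Ioo (0 : ℝ) 1) :
    maryPGF m t < maryPGF n t := by
  have hm' : (1 : ℝ) ≤ m := Nat.one_le_cast.2 hm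
  rw [maryPGF_eq hm, maryPGF_eq (hm.trans hmn)]
  exact one_add_div_pow_lt_one_add_div_pow hm hmn (by linarith [ht.1]) (sub_ne_zero.2 ht.2.ne)

lemma maryPGF_lt_labelledPGF (hm : 0 < m) (ht : t ∈ Ioo (0 : ℝ) 1) :
    maryPGF m t < labelledPGF t := by
  have hm' : (1 : ℝ) ≤ m := Nat.one_le_cast.2 hm
  rw [maryPGF_eq hm]
  exact one_add_div_pow_lt_exp hm (by linarith [ht.1]) (sub_ne_zero.2 ht.2.ne)

lemma labelledPGF_lt_fullBinaryPGF (ht : t ∈ Ioo (0 : ℝ) 1) : labelledPGF t < fullBinaryPGF t :=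
  calc labelledPGF t = Real.exp (-(1 - t)) := by rw [labelledPGF, neg_sub]
    _ < 1 - (1 - t) + (1 - t) ^ 2 / 2 := exp_neg_lt_one_sub_add_sq_div_two (sub_pos.2 ht.2)
    _ = fullBinaryPGF t := by rw [fullBinaryPGF]; ring

lemma fullBinaryPGF_lt_orderedPGF (ht : t ∈ Ioo (0 : ℝ) 1) : fullBinaryPGF t < orderedPGF t := by
  have h_gap : 0 < t * (1 - t) ^ 2 := mul_pos ht.1 (pow_pos (sub_pos.2 ht.2) 2)
  rw [fullBinaryPGF, orderedPGF, lt_div_iff₀ (by linarith [ht.2])]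
  linarith

lemma orderedPGF_lt_fullMaryPGF_three (ht : t ∈ Ioo (0 : ℝ) 1) :
    orderedPGF t < fullMaryPGF 3 t := by
  have h_gap : 0 < (1 + t) * (1 - t) ^ 3 :=
    mul_pos (by linarith [ht.1]) (pow_pos (sub_pos.2 ht.2) 3)
  rw [fullMaryPGF, orderedPGF, div_lt_div_iff₀ (by linarith [ht.2]) (by norm_num)]
  push_cast
  linarith

lemma fullMaryPGF_lt_fullMaryPGF (hm : 0 < m) (hmn : m < n) (ht : t ∈ Ioo (0 : ℝ) 1) :
    fullMaryPGF m t < fullMaryPGF n t := by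
  rw [fullMaryPGF_eq hm, fullMaryPGF_eq (hm.trans hmn)]
  linarith [pow_sub_one_div_lt_pow_sub_one_div hm hmn ht.1.le ht.2.ne]

lemma convexOn_maryPGF (hm : 0 < m) : ConvexOn ℝ (Icc 0 1) (maryPGF m) := by
  have hm' : (1 : ℝ) ≤ m := Nat.one_le_cast.2 hm
  have h := (convexOn_pow m).comp_affineMap (AffineMap.lineMap (1 - (m : ℝ)⁻¹) 1)
  refine (h.subset (fun t ht => ?_) (convex_Icc 0 1)).congr fun t _ => ?_
  · have := inv_le_one_of_one_le₀ hm'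
    simp only [mem_preimage, mem_Ici, AffineMap.lineMap_apply_ring']
    nlinarith [ht.1, ht.2]
  · simp only [Function.comp_apply, AffineMap.lineMap_apply_ring', maryPGF_eq hm]
    ring

lemma convexOn_labelledPGF : ConvexOn ℝ (Icc 0 1) labelledPGF :=
  (convexOn_exp.translate_left (-1)).subset (subset_univ _) (convex_Icc 0 1)

lemma convexOn_orderedPGF : ConvexOn ℝ (Icc 0 1) orderedPGF := by
  have h := (convexOn_zpow (𝕜 := ℝ) (-1)).comp_affineMap (AffineMap.lineMap 2 1)
  refine (h.subset (fun t ht => ?_) (convex_Icc 0 1)).congr fun t _ => ?_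
  · simp only [mem_preimage, mem_Ioi, AffineMap.lineMap_apply_ring']
    linarith [ht.2]
  · simp only [Function.comp_apply, AffineMap.lineMap_apply_ring', zpow_neg_one, orderedPGF]
    ring

lemma convexOn_fullMaryPGF (m : ℕ) : ConvexOn ℝ (Icc 0 1) (fullMaryPGF m) := by
  have h := ((convexOn_pow (𝕜 := ℝ) m).add_const (m - 1)).smul (c := (m : ℝ)⁻¹) (by positivity)
  refine (h.subset Icc_subset_Ici_self (convex_Icc 0 1)).congr fun t _ => ?_
  simp only [fullMaryPGF, smul_eq_mul, Pi.add_apply]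
  ring

lemma isQuadraticallyCritical_maryPGF (hm : 2 ≤ m) : IsQuadraticallyCritical (maryPGF m) := by
  have h_two : IsQuadraticallyCritical (maryPGF 2) := by
    refine ⟨convexOn_maryPGF two_pos, 1 / 4, by norm_num, fun t _ => le_of_eq ?_⟩
    rw [maryPGF]
    ring
  rcases hm.eq_or_lt with rfl | h_lt
  · exact h_two
  · exact h_two.mono (convexOn_maryPGF (by omega))
      fun _ ht => (maryPGF_lt_maryPGF two_pos h_lt ht).le

lemma isQuadraticallyCritical_labelledPGF : IsQuadraticallyCritical labelledPGF :=
  (isQuadraticallyCritical_maryPGF le_rfl).mono convexOn_labelledPGF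
    fun _ ht => (maryPGF_lt_labelledPGF two_pos ht).le

lemma isQuadraticallyCritical_fullBinaryPGF : IsQuadraticallyCritical fullBinaryPGF :=
  isQuadraticallyCritical_labelledPGF.mono (fullMaryPGF_two ▸ convexOn_fullMaryPGF 2)
    fun _ ht => (labelledPGF_lt_fullBinaryPGF ht).le

lemma isQuadraticallyCritical_orderedPGF : IsQuadraticallyCritical orderedPGF :=
  isQuadraticallyCritical_fullBinaryPGF.mono convexOn_orderedPGF
    fun _ ht => (fullBinaryPGF_lt_orderedPGF ht).le

lemma isQuadraticallyCritical_fullMaryPGF (hm : 2 < m) : IsQuadraticallyCritical (fullMaryPGF m) :=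
  isQuadraticallyCritical_fullBinaryPGF.mono (convexOn_fullMaryPGF m)
    fun _ ht => (fullMaryPGF_two ▸ fullMaryPGF_lt_fullMaryPGF two_pos hm ht).le

end Models

/-- Theorem 6.13 of the paper. Orderings of `μ(α)` and `μ'` across the
standard models: `m`-ary trees (`Φ_{1,m}`), labelled trees (`Φ₂`), full binary trees (`Φ₃`),
ordered trees (`Φ₄`), and full `m`-ary trees (`Φ_{5,m}`). -/
theorem stmt13
    (q1 : ℕ → ℕ → ℝ) (q2 q3 q4 : ℕ → ℝ) (q5 : ℕ → ℕ → ℝ)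
    (h1 : ∀ m : ℕ, 2 ≤ m →
      IsTreeSizeDist (fun t => (((m : ℝ) - 1 + t) / m) ^ m) (q1 m))
    (h2 : IsTreeSizeDist (fun t => Real.exp (t - 1)) q2)
    (h3 : IsTreeSizeDist (fun t => (1 + t ^ 2) / 2) q3)
    (h4 : IsTreeSizeDist (fun t => 1 / (2 - t)) q4)
    (h5 : ∀ m : ℕ, 3 ≤ m →
      IsTreeSizeDist (fun t => ((m : ℝ) - 1 + t ^ m) / m) (q5 m)) :
    (∀ α : ℝ, α < 0 →
      (∀ m n : ℕ, 2 ≤ m → m < n → muPow (q1 m) α < muPow (q1 n) α) ∧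
      (∀ m n : ℕ, 3 ≤ m → m < n → muPow (q5 m) α < muPow (q5 n) α) ∧
      (∀ m : ℕ, 2 ≤ m → muPow (q1 m) α < muPow q2 α) ∧
      muPow q2 α < muPow q3 α ∧ muPow q3 α < muPow q4 α ∧
      muPow q4 α < muPow (q5 3) α) ∧
    (∀ α : ℝ, 0 < α → α < 1/2 →
      (∀ m n : ℕ, 2 ≤ m → m < n → muPow (q1 n) α < muPow (q1 m) α) ∧
      (∀ m n : ℕ, 3 ≤ m → m < n → muPow (q5 n) α < muPow (q5 m) α) ∧
      (∀ m : ℕ, 2 ≤ m → muPow q2 α < muPow (q1 m) α) ∧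
      muPow q3 α < muPow q2 α ∧ muPow q4 α < muPow q3 α ∧
      muPow (q5 3) α < muPow q4 α) ∧
    ((∀ m n : ℕ, 2 ≤ m → m < n → muLog (q1 n) < muLog (q1 m)) ∧
      (∀ m n : ℕ, 3 ≤ m → m < n → muLog (q5 n) < muLog (q5 m)) ∧
      (∀ m : ℕ, 2 ≤ m → muLog q2 < muLog (q1 m)) ∧
      muLog q3 < muLog q2 ∧ muLog q4 < muLog q3 ∧
      muLog (q5 3) < muLog q4) := by
  have h11 (m n : ℕ) (hm : 2 ≤ m) (hmn : m < n) : MomentLT (q1 m) (q1 n) :=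
    (h1 m hm).momentLT (h1 n (hm.trans hmn.le)) (isQuadraticallyCritical_maryPGF hm)
      fun _ => maryPGF_lt_maryPGF (by omega) hmn
  have h55 (m n : ℕ) (hm : 3 ≤ m) (hmn : m < n) : MomentLT (q5 m) (q5 n) :=
    (h5 m hm).momentLT (h5 n (hm.trans hmn.le)) (isQuadraticallyCritical_fullMaryPGF hm)
      fun _ => fullMaryPGF_lt_fullMaryPGF (by omega) hmn
  have h12 (m : ℕ) (hm : 2 ≤ m) : MomentLT (q1 m) q2 :=
    (h1 m hm).momentLT h2 (isQuadraticallyCritical_maryPGF hm)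
      fun _ => maryPGF_lt_labelledPGF (by omega)
  have h23 : MomentLT q2 q3 :=
    h2.momentLT h3 isQuadraticallyCritical_labelledPGF fun _ => labelledPGF_lt_fullBinaryPGF
  have h34 : MomentLT q3 q4 :=
    h3.momentLT h4 isQuadraticallyCritical_fullBinaryPGF fun _ => fullBinaryPGF_lt_orderedPGF
  have h45 : MomentLT q4 (q5 3) :=
    h4.momentLT (h5 3 le_rfl) isQuadraticallyCritical_orderedPGF
      fun _ => orderedPGF_lt_fullMaryPGF_three
  exact ⟨fun α hα => ⟨fun m n hm hmn => (h11 m n hm hmn).muPow_neg α hα,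
      fun m n hm hmn => (h55 m n hm hmn).muPow_neg α hα, fun m hm => (h12 m hm).muPow_neg α hα,
      h23.muPow_neg α hα, h34.muPow_neg α hα, h45.muPow_neg α hα⟩,
    fun α hα hα' => ⟨fun m n hm hmn => (h11 m n hm hmn).muPow_pos α hα hα',
      fun m n hm hmn => (h55 m n hm hmn).muPow_pos α hα hα',
      fun m hm => (h12 m hm).muPow_pos α hα hα',
      h23.muPow_pos α hα hα', h34.muPow_pos α hα hα', h45.muPow_pos α hα hα'⟩,
    fun m n hm hmn => (h11 m n hm hmn).muLog, fun m n hm hmn => (h55 m n hm hmn).muLog,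
    fun m hm => (h12 m hm).muLog, h23.muLog, h34.muLog, h45.muLog⟩
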